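/- Let t ∈ U = U^+_{r,s}(sl_3) and μ_1, μ_2 ∈ ℂ. If tE_1 − E_1t + μ_1E_1 = 0 and tE_2 − E_2t + μ_2E_2 = 0, then μ_1 = μ_2 = 0 and t ∈ ℂ·1 (so the inner derivation ad_t is zero). In other words, the decomposition of a derivation of U as ad_t + μ_1D_1 + μ_2D_2 is unique in the sense that ad_t, μ_1 and μ_2 are uniquely determined. -/

import Mathlib

/-!
Evaluating at `E₁ = 1, E₂ = 0` (resp. `E₁ = 0, E₂ = 1`) in `ℂ` kills commutators, so
`μ₁ = μ₂ = 0` and `t` is central.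

For the centre, let `M` have basis `e (a, b, c)`, standing for the PBW monomial
`E₂ ^ a * E₃ ^ b * E₁ ^ c`, and let `U` act on `M` as left multiplication acts on these monomials
(`pbwRep`). The linear map `M → U` sending basis vectors to PBW monomials is `U`-equivariant, so
`t` is recovered from `m = t • e (0, 0, 0)` (`toU_pbwRep`). Right multiplication by `E₁` and by
`E₃` is given on `M` by operators `R₁`, `R₃` commuting with the action, so for central `t` one
gets `R₁ m = E₁ • m` and `R₃ m = E₃ • m`. The coefficient of `e (a, b, c + 1)` in the first equation
is `(s ^ a * r ^ b - 1) * m (a, b, c) + [a + 1] * m (a + 1, b - 1, c + 1) = 0`, where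
`[a + 1]` is a quantum integer and the last term is absent for `b = 0`; by
downward induction on `a` and multiplicative independence this kills every `m (a, b, c)` with
`(a, b) ≠ (0, 0)`. The coefficient of `e (0, 1, c)` in the second is
`(r ^ c - 1) * m (0, 0, c) = 0`, leaving only `m (0, 0, 0)`.
-/

noncomputable section

open FreeAlgebra

/-- The two quantum Serre relations defining `U⁺_{r,s}(sl₃)` as a quotient of the
free algebra on two generators (generator `0` is `E₁`, generator `1` is `E₂`). -/
inductive URel (r s : ℂ) : FreeAlgebra ℂ (Fin 2) → FreeAlgebra ℂ (Fin 2) → Prop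
  | serre1 : URel r s
      (ι ℂ (0 : Fin 2) * ι ℂ 0 * ι ℂ 1 - (r + s) • (ι ℂ (0 : Fin 2) * ι ℂ 1 * ι ℂ 0)
        + (r * s) • (ι ℂ (1 : Fin 2) * ι ℂ 0 * ι ℂ 0)) 0
  | serre2 : URel r s
      (ι ℂ (0 : Fin 2) * ι ℂ 1 * ι ℂ 1 - (r + s) • (ι ℂ (1 : Fin 2) * ι ℂ 0 * ι ℂ 1)
        + (r * s) • (ι ℂ (1 : Fin 2) * ι ℂ 1 * ι ℂ 0)) 0

/-- `U⁺_{r,s}(sl₃)`: quotient of the free algebra by the two-sided ideal generated by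
the two quantum Serre relations. -/
abbrev Usl3 (r s : ℂ) := RingQuot (URel r s)

def E₁ (r s : ℂ) : Usl3 r s := RingQuot.mkAlgHom ℂ (URel r s) (ι ℂ 0)

def E₂ (r s : ℂ) : Usl3 r s := RingQuot.mkAlgHom ℂ (URel r s) (ι ℂ 1)

def E₃ (r s : ℂ) : Usl3 r s := E₁ r s * E₂ r s - s • (E₂ r s * E₁ r s)

/-! ### The PBW module -/

variable (r s : ℂ)

/-- The space with basis indexed by the exponents `(a, b, c)` of the PBW monomials
`E₂ ^ a * E₃ ^ b * E₁ ^ c`. -/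
abbrev PBW := (ℕ × ℕ × ℕ) →₀ ℂ

/-- The basis vector of `PBW` standing for `E₂ ^ a * E₃ ^ b * E₁ ^ c`. -/
def pbwBasis (a b c : ℕ) : PBW := Finsupp.single (a, b, c) 1

/-- The two-parameter quantum integer `(r ^ a - s ^ a) / (r - s)`, defined by recursion. -/
def qInt : ℕ → ℂ
  | 0 => 0
  | a + 1 => s ^ a + r * qInt a

/-- The linear map on `PBW` with prescribed values on the basis. -/
def pbwLift {V : Type*} [AddCommGroup V] [Module ℂ V] (f : ℕ → ℕ → ℕ → V) : PBW →ₗ[ℂ] V :=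
  Finsupp.linearCombination ℂ (fun p => f p.1 p.2.1 p.2.2)

@[simp] lemma pbwLift_basis {V : Type*} [AddCommGroup V] [Module ℂ V] (f : ℕ → ℕ → ℕ → V)
    (a b c : ℕ) : pbwLift f (pbwBasis a b c) = f a b c := by
  simp [pbwLift, pbwBasis]

lemma pbw_ext {V : Type*} [AddCommGroup V] [Module ℂ V] {f g : PBW →ₗ[ℂ] V}
    (h : ∀ a b c, f (pbwBasis a b c) = g (pbwBasis a b c)) : f = g := by
  apply Finsupp.lhom_ext'
  rintro ⟨a, b, c⟩
  ext
  exact h a b c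

/-- Left multiplication by `E₁` on PBW monomials. For `a = 0` the truncated `a - 1` is harmless
because `qInt r s 0 = 0`. -/
def L₁ : Module.End ℂ PBW :=
  pbwLift fun a b c =>
    (s ^ a * r ^ b) • pbwBasis a b (c + 1) + qInt r s a • pbwBasis (a - 1) (b + 1) c

/-- Left multiplication by `E₂` on PBW monomials. -/
def L₂ : Module.End ℂ PBW := pbwLift fun a b c => pbwBasis (a + 1) b c

/-- Right multiplication by `E₁` on PBW monomials. -/
def R₁ : Module.End ℂ PBW := pbwLift fun a b c => pbwBasis a b (c + 1)

/-- Right multiplication by `E₃` on PBW monomials. -/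
def R₃ : Module.End ℂ PBW := pbwLift fun a b c => r ^ c • pbwBasis a (b + 1) c

@[simp] lemma L₁_basis (a b c : ℕ) : L₁ r s (pbwBasis a b c) =
    (s ^ a * r ^ b) • pbwBasis a b (c + 1) + qInt r s a • pbwBasis (a - 1) (b + 1) c :=
  pbwLift_basis _ a b c

@[simp] lemma L₂_basis (a b c : ℕ) : L₂ (pbwBasis a b c) = pbwBasis (a + 1) b c :=
  pbwLift_basis _ a b c

@[simp] lemma R₁_basis (a b c : ℕ) : R₁ (pbwBasis a b c) = pbwBasis a b (c + 1) :=
  pbwLift_basis _ a b c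

@[simp] lemma R₃_basis (a b c : ℕ) : R₃ r (pbwBasis a b c) = r ^ c • pbwBasis a (b + 1) c :=
  pbwLift_basis _ a b c

lemma serre1_L : L₁ r s * L₁ r s * L₂ - (r + s) • (L₁ r s * L₂ * L₁ r s)
    + (r * s) • (L₂ * L₁ r s * L₁ r s) = 0 := by
  apply pbw_ext
  intro a b c
  rcases a with _ | _ | a <;> simp [qInt] <;> module

lemma serre2_L : L₁ r s * L₂ * L₂ - (r + s) • (L₂ * L₁ r s * L₂)
    + (r * s) • (L₂ * L₂ * L₁ r s) = 0 := by
  apply pbw_ext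
  intro a b c
  rcases a with _ | a <;> simp [qInt] <;> module

/-- The action of `U⁺_{r,s}(sl₃)` on `PBW` by left multiplication on PBW monomials. -/
def pbwRep : Usl3 r s →ₐ[ℂ] Module.End ℂ PBW :=
  RingQuot.liftAlgHom ℂ ⟨FreeAlgebra.lift ℂ ![L₁ r s, L₂], by
    rintro _ _ (_ | _)
    · simpa using serre1_L r s
    · simpa using serre2_L r s⟩

@[simp] lemma pbwRep_E₁ : pbwRep r s (E₁ r s) = L₁ r s := by simp [pbwRep, E₁]

@[simp] lemma pbwRep_E₂ : pbwRep r s (E₂ r s) = L₂ := by simp [pbwRep, E₂]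

lemma pbwRep_E₃_basis (a b c : ℕ) :
    pbwRep r s (E₃ r s) (pbwBasis a b c) = r ^ a • pbwBasis a (b + 1) c := by
  -- the coefficient is `[a + 1] - s [a] = r ^ a`
  have h : qInt r s (a + 1) - s * qInt r s a = r ^ a := by
    induction a with
    | zero => simp [qInt]
    | succ a ih =>
      rw [pow_succ, ← ih]; simp only [qInt]; ring
  rcases a with _ | a
  · simp [E₃, qInt]
    module
  · rw [← h]
    simp [E₃]
    module

/-- Induction principle for `U⁺_{r,s}(sl₃)` as the algebra generated by `E₁` and `E₂`. -/
lemma usl3_induction {P : Usl3 r s → Prop} (halg : ∀ c, P (algebraMap ℂ _ c))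
    (h₁ : P (E₁ r s)) (h₂ : P (E₂ r s)) (hmul : ∀ x y, P x → P y → P (x * y))
    (hadd : ∀ x y, P x → P y → P (x + y)) (t : Usl3 r s) : P t := by
  obtain ⟨t, rfl⟩ := RingQuot.mkAlgHom_surjective ℂ (URel r s) t
  induction t using FreeAlgebra.induction with
  | grade0 c => simpa using halg c
  | grade1 i =>
    fin_cases i
    · exact h₁
    · exact h₂
  | mul x y hx hy => simpa using hmul _ _ hx hy
  | add x y hx hy => simpa using hadd _ _ hx hy

lemma commute_pbwRep {R : Module.End ℂ PBW} (h₁ : Commute R (L₁ r s)) (h₂ : Commute R L₂)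
    (t : Usl3 r s) : Commute R (pbwRep r s t) := by
  induction t using usl3_induction with
  | halg c => rw [AlgHom.commutes]; exact Algebra.commute_algebraMap_right c R
  | h₁ => simpa using h₁
  | h₂ => simpa using h₂
  | hmul x y hx hy => rw [map_mul]; exact hx.mul_right hy
  | hadd x y hx hy => rw [map_add]; exact hx.add_right hy

lemma commute_R₁ (t : Usl3 r s) : Commute R₁ (pbwRep r s t) := by
  apply commute_pbwRep <;> apply pbw_ext <;> intro a b c <;> simp

lemma commute_R₃ (t : Usl3 r s) : Commute (R₃ r) (pbwRep r s t) := by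
  apply commute_pbwRep <;> apply pbw_ext <;> intro a b c <;> simp
  module

/-! ### Recovering an element from its action -/

lemma serre1_E : E₁ r s * E₁ r s * E₂ r s - (r + s) • (E₁ r s * E₂ r s * E₁ r s)
    + (r * s) • (E₂ r s * E₁ r s * E₁ r s) = 0 := by
  simpa [E₁, E₂] using RingQuot.mkAlgHom_rel ℂ (URel.serre1 (r := r) (s := s))

lemma serre2_E : E₁ r s * E₂ r s * E₂ r s - (r + s) • (E₂ r s * E₁ r s * E₂ r s)
    + (r * s) • (E₂ r s * E₂ r s * E₁ r s) = 0 := by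
  simpa [E₁, E₂] using RingQuot.mkAlgHom_rel ℂ (URel.serre2 (r := r) (s := s))

lemma E₁_mul_E₃ : E₁ r s * E₃ r s = r • (E₃ r s * E₁ r s) := by
  rw [← sub_eq_zero, ← serre1_E r s]
  simp only [E₃, mul_sub, sub_mul, mul_smul_comm, smul_mul_assoc, mul_assoc]
  module

lemma E₃_mul_E₂ : E₃ r s * E₂ r s = r • (E₂ r s * E₃ r s) := by
  rw [← sub_eq_zero, ← serre2_E r s]
  simp only [E₃, mul_sub, sub_mul, mul_smul_comm, smul_mul_assoc, mul_assoc]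
  module

lemma E₁_mul_E₂ : E₁ r s * E₂ r s = s • (E₂ r s * E₁ r s) + E₃ r s := by
  simp [E₃]

lemma E₁_mul_E₃_pow (b : ℕ) : E₁ r s * E₃ r s ^ b = r ^ b • (E₃ r s ^ b * E₁ r s) := by
  induction b with
  | zero => simp
  | succ b ih =>
    rw [pow_succ, ← mul_assoc, ih, smul_mul_assoc, mul_assoc, E₁_mul_E₃, mul_smul_comm,
      smul_smul, pow_succ, mul_assoc]

lemma E₁_mul_E₂_pow (a : ℕ) : E₁ r s * E₂ r s ^ a =
    s ^ a • (E₂ r s ^ a * E₁ r s) + qInt r s a • (E₂ r s ^ (a - 1) * E₃ r s) := by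
  induction a with
  | zero => simp [qInt]
  | succ a ih =>
    rw [pow_succ, ← mul_assoc, ih, add_mul, smul_mul_assoc, smul_mul_assoc, mul_assoc, mul_assoc,
      E₁_mul_E₂, E₃_mul_E₂]
    rcases a with _ | a
    · simp [qInt]
    · simp only [qInt, pow_succ, mul_add, mul_smul_comm, mul_assoc, Nat.add_sub_cancel]
      module

/-- The linear map from `PBW` to `U⁺_{r,s}(sl₃)` sending each basis vector to its PBW monomial. -/
def toU : PBW →ₗ[ℂ] Usl3 r s :=
  pbwLift fun a b c => E₂ r s ^ a * E₃ r s ^ b * E₁ r s ^ c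

@[simp] lemma toU_basis (a b c : ℕ) :
    toU r s (pbwBasis a b c) = E₂ r s ^ a * E₃ r s ^ b * E₁ r s ^ c :=
  pbwLift_basis _ a b c

lemma toU_L₁ (m : PBW) : toU r s (L₁ r s m) = E₁ r s * toU r s m := by
  suffices h : toU r s ∘ₗ L₁ r s = LinearMap.mulLeft ℂ (E₁ r s) ∘ₗ toU r s from
    LinearMap.congr_fun h m
  apply pbw_ext
  intro a b c
  simp only [LinearMap.comp_apply, L₁_basis, map_add, map_smul, toU_basis,
    LinearMap.mulLeft_apply]
  rw [← mul_assoc, ← mul_assoc, E₁_mul_E₂_pow, add_mul, smul_mul_assoc, mul_assoc _ (E₁ r s),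
    E₁_mul_E₃_pow, pow_succ' (E₁ r s), pow_succ' (E₃ r s)]
  simp only [add_mul, smul_mul_assoc, mul_smul_comm, mul_assoc, smul_smul]

lemma toU_L₂ (m : PBW) : toU r s (L₂ m) = E₂ r s * toU r s m := by
  suffices h : toU r s ∘ₗ L₂ = LinearMap.mulLeft ℂ (E₂ r s) ∘ₗ toU r s from
    LinearMap.congr_fun h m
  apply pbw_ext
  intro a b c
  simp [pow_succ', mul_assoc]

/-- `toU` intertwines the action on `PBW` with left multiplication. -/
lemma toU_pbwRep (t : Usl3 r s) : ∀ m, toU r s (pbwRep r s t m) = t * toU r s m := by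
  induction t using usl3_induction with
  | halg c => intro m; simp [Algebra.algebraMap_eq_smul_one]
  | h₁ => intro m; simpa using toU_L₁ r s m
  | h₂ => intro m; simpa using toU_L₂ r s m
  | hmul x y hx hy => intro m; simp [hx, hy, mul_assoc]
  | hadd x y hx hy => intro m; simp [hx, hy, add_mul]

/-! ### Coefficients -/

lemma R₁_coeff (m : PBW) (a b c : ℕ) : R₁ m (a, b, c + 1) = m (a, b, c) := by
  suffices h : Finsupp.lapply (a, b, c + 1) ∘ₗ R₁ = Finsupp.lapply (a, b, c) from
    LinearMap.congr_fun h m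
  apply pbw_ext
  intro a' b' c'
  simp [pbwBasis, Finsupp.single_apply, R₁, pbwLift]

lemma L₁_coeff_zero (m : PBW) (a c : ℕ) :
    L₁ r s m (a, 0, c + 1) = s ^ a * m (a, 0, c) := by
  suffices h : Finsupp.lapply (a, 0, c + 1) ∘ₗ L₁ r s = s ^ a • Finsupp.lapply (a, 0, c) from
    LinearMap.congr_fun h m
  apply pbw_ext
  intro a' b' c'
  simp only [LinearMap.comp_apply, L₁_basis]
  simp only [pbwBasis, map_add, map_smul, LinearMap.smul_apply, Finsupp.lapply_apply,
    Finsupp.single_apply, Prod.mk.injEq, smul_eq_mul]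
  by_cases h : a' = a ∧ b' = 0 ∧ c' = c
  · obtain ⟨rfl, rfl, rfl⟩ := h
    simp
  · simp [h]

lemma L₁_coeff_succ (m : PBW) (a b c : ℕ) :
    L₁ r s m (a, b + 1, c + 1) =
      s ^ a * r ^ (b + 1) * m (a, b + 1, c) + qInt r s (a + 1) * m (a + 1, b, c + 1) := by
  suffices h : Finsupp.lapply (a, b + 1, c + 1) ∘ₗ L₁ r s =
      (s ^ a * r ^ (b + 1)) • Finsupp.lapply (a, b + 1, c) +
        qInt r s (a + 1) • Finsupp.lapply (a + 1, b, c + 1) from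
    LinearMap.congr_fun h m
  apply pbw_ext
  intro a' b' c'
  simp only [LinearMap.comp_apply, L₁_basis]
  simp only [pbwBasis, map_add, map_smul, LinearMap.smul_apply, LinearMap.add_apply,
    Finsupp.lapply_apply, Finsupp.single_apply, Prod.mk.injEq, smul_eq_mul, Nat.add_right_cancel_iff]
  congr 1
  · by_cases h : a' = a ∧ b' = b + 1 ∧ c' = c
    · obtain ⟨rfl, rfl, rfl⟩ := h
      simp
    · simp [h]
  · rcases a' with _ | a'
    · simp [qInt]
    · by_cases h : a' = a ∧ b' = b ∧ c' = c + 1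
      · obtain ⟨rfl, rfl, rfl⟩ := h
        simp
      · simp [h]

lemma R₃_coeff (m : PBW) (c : ℕ) : R₃ r m (0, 1, c) = r ^ c * m (0, 0, c) := by
  suffices h : Finsupp.lapply (0, 1, c) ∘ₗ R₃ r = r ^ c • Finsupp.lapply (0, 0, c) from
    LinearMap.congr_fun h m
  apply pbw_ext
  intro a' b' c'
  simp only [LinearMap.comp_apply, R₃_basis]
  simp only [pbwBasis, map_smul, LinearMap.smul_apply, Finsupp.lapply_apply,
    Finsupp.single_apply, Prod.mk.injEq, smul_eq_mul]
  by_cases h : a' = 0 ∧ b' = 0 ∧ c' = c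
  · obtain ⟨rfl, rfl, rfl⟩ := h
    simp
  · simp [h]

lemma pbwRep_E₃_coeff (m : PBW) (c : ℕ) : pbwRep r s (E₃ r s) m (0, 1, c) = m (0, 0, c) := by
  suffices h : Finsupp.lapply (0, 1, c) ∘ₗ pbwRep r s (E₃ r s) = Finsupp.lapply (0, 0, c) from
    LinearMap.congr_fun h m
  apply pbw_ext
  intro a' b' c'
  rw [LinearMap.comp_apply, pbwRep_E₃_basis]
  simp only [pbwBasis, map_smul, Finsupp.lapply_apply,
    Finsupp.single_apply, Prod.mk.injEq, smul_eq_mul]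
  by_cases h : a' = 0 ∧ b' = 0 ∧ c' = c
  · obtain ⟨rfl, rfl, rfl⟩ := h
    simp
  · simp [h]

/-! ### The centre -/

/-- A vector on which left and right multiplication by `E₁`, resp. by `E₃`, agree is a multiple
of the basis vector standing for `1`. -/
lemma eq_smul_of_central
    (hind : ∀ m n : ℤ, r ^ m * s ^ n = 1 → m = 0 ∧ n = 0) (m : PBW)
    (hm₁ : R₁ m = L₁ r s m) (hm₃ : R₃ r m = pbwRep r s (E₃ r s) m) :
    m = m (0, 0, 0) • pbwBasis 0 0 0 := by
  have hpow (a b : ℕ) (h : s ^ a * r ^ b = 1) : a = 0 ∧ b = 0 := by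
    have := hind b a (by rw [zpow_natCast, zpow_natCast, mul_comm, h])
    omega
  -- downward induction step: the coefficients in `E₂`-degree `a + 1` control those in degree `a`
  have step (a : ℕ) (ha : ∀ b c, m (a + 1, b, c) = 0) (b c : ℕ) (hab : ¬(a = 0 ∧ b = 0)) :
      m (a, b, c) = 0 := by
    have key : s ^ a * r ^ b * m (a, b, c) = m (a, b, c) := by
      have h := R₁_coeff m a b c
      rw [hm₁] at h
      rcases b with _ | b
      · rwa [L₁_coeff_zero, ← mul_one (s ^ a), ← pow_zero r] at h
      · rwa [L₁_coeff_succ, ha, mul_zero, add_zero] at h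
    by_contra hne
    exact hab (hpow a b (mul_right_cancel₀ hne (by rw [key, one_mul])))
  have hlarge : ∃ N, ∀ a, N < a → ∀ b c, m (a, b, c) = 0 := by
    refine ⟨m.support.sup Prod.fst, fun a ha b c => ?_⟩
    by_contra hne
    exact absurd (Finset.le_sup (f := Prod.fst) (Finsupp.mem_support_iff.mpr hne))
      (not_le.mpr ha)
  obtain ⟨N, hN⟩ := hlarge
  have hpos (k : ℕ) : ∀ a, N < a + k → 0 < a → ∀ b c, m (a, b, c) = 0 := by
    induction k with
    | zero => intro a ha _; exact hN a ha
    | succ k ih =>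
      intro a ha ha0 b c
      exact step a (ih (a + 1) (by omega) (by omega)) b c (by omega)
  have hone (a : ℕ) (ha : 0 < a) : ∀ b c, m (a, b, c) = 0 := hpos (N + 1) a (by omega) ha
  have hE₁ (c : ℕ) (hc : c ≠ 0) : m (0, 0, c) = 0 := by
    have h : r ^ c * m (0, 0, c) = m (0, 0, c) := by
      rw [← R₃_coeff, hm₃, pbwRep_E₃_coeff]
    by_contra hne
    exact hc (hpow 0 c (by simpa using mul_right_cancel₀ hne (by rw [h, one_mul]))).2
  ext ⟨a, b, c⟩
  by_cases h : a = 0 ∧ b = 0 ∧ c = 0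
  · obtain ⟨rfl, rfl, rfl⟩ := h
    simp [pbwBasis]
  · have hz : m (a, b, c) = 0 := by
      rcases Nat.eq_zero_or_pos a with rfl | ha
      · rcases Nat.eq_zero_or_pos b with rfl | hb
        · exact hE₁ c (by simpa using h)
        · exact step 0 (hone 1 one_pos) b c (by omega)
      · exact hone a ha b c
    rw [hz]
    simp only [pbwBasis, Finsupp.smul_apply, Finsupp.single_apply, Prod.mk.injEq, smul_eq_mul]
    rw [if_neg (by omega), mul_zero]

/-- The character of `U⁺_{r,s}(sl₃)` with `E₁ ↦ x` and `E₂ ↦ y`, where `x * y = 0`. -/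
def character (x y : ℂ) (hxy : x * y = 0) : Usl3 r s →ₐ[ℂ] ℂ :=
  RingQuot.liftAlgHom ℂ ⟨FreeAlgebra.lift ℂ ![x, y], by
    rintro _ _ (_ | _)
    · simp
      linear_combination (x - (r + s) * x + r * s * x) * hxy
    · simp
      linear_combination (y - (r + s) * y + r * s * y) * hxy⟩

@[simp] lemma character_E₁ (x y : ℂ) (hxy : x * y = 0) :
    character r s x y hxy (E₁ r s) = x := by simp [character, E₁]

@[simp] lemma character_E₂ (x y : ℂ) (hxy : x * y = 0) :
    character r s x y hxy (E₂ r s) = y := by simp [character, E₂]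

/-- if `t ∈ U⁺_{r,s}(sl₃)` and `μ₁, μ₂ ∈ ℂ` satisfy
`tE₁ - E₁t + μ₁E₁ = 0` and `tE₂ - E₂t + μ₂E₂ = 0`, then `μ₁ = μ₂ = 0` and `t` is a
scalar (so `ad_t = 0`): the decomposition `D = ad_t + μ₁D₁ + μ₂D₂` is unique. -/
theorem stmt18 (r s : ℂ) (hr : r ≠ 0) (hs : s ≠ 0)
    (hind : ∀ m n : ℤ, r ^ m * s ^ n = 1 → m = 0 ∧ n = 0)
    (t : Usl3 r s) (μ₁ μ₂ : ℂ)
    (h1 : t * E₁ r s - E₁ r s * t + μ₁ • E₁ r s = 0)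
    (h2 : t * E₂ r s - E₂ r s * t + μ₂ • E₂ r s = 0) :
    μ₁ = 0 ∧ μ₂ = 0 ∧ ∃ c : ℂ, t = algebraMap ℂ (Usl3 r s) c := by
  have hμ₁ : μ₁ = 0 := by
    simpa using congrArg (character r s 1 0 (by simp)) h1
  have hμ₂ : μ₂ = 0 := by
    simpa using congrArg (character r s 0 1 (by simp)) h2
  refine ⟨hμ₁, hμ₂, ?_⟩
  have c1 : t * E₁ r s = E₁ r s * t := by simpa [hμ₁, sub_eq_zero] using h1
  have c2 : t * E₂ r s = E₂ r s * t := by simpa [hμ₂, sub_eq_zero] using h2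
  have c3 : t * E₃ r s = E₃ r s * t :=
    ((Commute.mul_right c1 c2).sub_right ((Commute.mul_right c2 c1).smul_right s)).eq
  set m := pbwRep r s t (pbwBasis 0 0 0) with hm
  have hm₁ : R₁ m = L₁ r s m := by
    have h := LinearMap.congr_fun (commute_R₁ r s t).eq (pbwBasis 0 0 0)
    have h' := congrArg (fun x => pbwRep r s x (pbwBasis 0 0 0)) c1
    simp [qInt] at h h'
    rw [hm, h, h']
  have hm₃ : R₃ r m = pbwRep r s (E₃ r s) m := by
    have h := LinearMap.congr_fun (commute_R₃ r s t).eq (pbwBasis 0 0 0)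
    have h' := congrArg (fun x => pbwRep r s x (pbwBasis 0 0 0)) c3
    simp [pbwRep_E₃_basis] at h h'
    rw [hm, h, h']
  have key := toU_pbwRep r s t (pbwBasis 0 0 0)
  rw [← hm, eq_smul_of_central r s hind m hm₁ hm₃] at key
  refine ⟨m (0, 0, 0), ?_⟩
  simpa [Algebra.algebraMap_eq_smul_one] using key.symm
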